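/- Dynamic programming in reduced coordinates: under the group-symmetry and moving-frame assumptions, the reduced value functions J̄_k := J_k ∘ s satisfy, for every k < N and every y in the range of ρ, the recursion J̄_k(y) = ⨅_{u ∈ U} ∫⁻_W (g_k(s(y),u,w) + J̄_{k+1}(ρ(f_k(s(y),u,w)))) dμ_k(w), together with J̄_N = g_N ∘ s. -/

import Mathlib

open MeasureTheory
open scoped ENNReal

/-!
Transporting controls and disturbances along one symmetry gives `J k (φ x) ≤ J k x` by backward
induction: the infimum over `u` is at most the infimum over the controls `χ u`, and the lower
integral does not decrease when it is pulled back along the measure-preserving map `ψ`. Applying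
the same inequality to the inverse symmetry gives equality, so `J (k + 1)` is unchanged when a
state `x` is replaced by its representative `s (ρ x) = φ (γ x) x`.
-/

section Bellman

variable {X U W : Type*} [MeasurableSpace W]

/-- The one-stage dynamic programming operator: the infimum over controls of the expected stage
cost plus continuation cost `V` at the next state. For a non-measurable integrand, `∫⁻` is the
lower integral. -/
noncomputable def bellmanOperator (μ : Measure W) (f : X → U → W → X) (g : X → U → W → ℝ≥0∞)
    (V : X → ℝ≥0∞) (x : X) : ℝ≥0∞ :=
  ⨅ u, ∫⁻ w, (g x u w + V (f x u w)) ∂μ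

/-- The family `J` is the family of value functions of the control problem with horizon `N`. The
data are indexed by all of `ℕ`; only `J k` for `k ≤ N` is constrained. -/
structure IsValueFunction (N : ℕ) (μ : ℕ → Measure W) (f : ℕ → X → U → W → X)
    (g : ℕ → X → U → W → ℝ≥0∞) (gN : X → ℝ≥0∞) (J : ℕ → X → ℝ≥0∞) : Prop where
  terminal : ∀ x, J N x = gN x
  recursion : ∀ k < N, ∀ x, J k x = bellmanOperator (μ k) (f k) (g k) (J (k + 1)) x

/-- A symmetry of the control problem with horizon `N`: transformations of states, controls and
disturbances that commute with the dynamics and preserve all costs and disturbance laws. They need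
not be invertible. -/
structure IsControlSymmetry (N : ℕ) (μ : ℕ → Measure W) (f : ℕ → X → U → W → X)
    (g : ℕ → X → U → W → ℝ≥0∞) (gN : X → ℝ≥0∞) (φ : X → X) (χ : U → U) (ψ : W → W) : Prop where
  dynamics : ∀ k < N, ∀ x u w, φ (f k x u w) = f k (φ x) (χ u) (ψ w)
  stageCost : ∀ k < N, ∀ x u w, g k (φ x) (χ u) (ψ w) = g k x u w
  terminalCost : ∀ x, gN (φ x) = gN x
  measurePreserving : ∀ k < N, MeasurePreserving ψ (μ k) (μ k)

theorem bellmanOperator_apply_le {X' U' W' : Type*} [MeasurableSpace W']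
    {μ : Measure W} {f : X → U → W → X} {g : X → U → W → ℝ≥0∞} {V : X → ℝ≥0∞}
    {μ' : Measure W'} {f' : X' → U' → W' → X'} {g' : X' → U' → W' → ℝ≥0∞} {V' : X' → ℝ≥0∞}
    {φ : X → X'} {χ : U → U'} {ψ : W → W'} (hψ : MeasurePreserving ψ μ μ')
    (hf : ∀ x u w, φ (f x u w) = f' (φ x) (χ u) (ψ w))
    (hg : ∀ x u w, g' (φ x) (χ u) (ψ w) ≤ g x u w) (hV : ∀ x, V' (φ x) ≤ V x) (x : X) :
    bellmanOperator μ' f' g' V' (φ x) ≤ bellmanOperator μ f g V x := by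
  refine le_iInf fun u => iInf_le_of_le (χ u) ?_
  calc
    ∫⁻ w, (g' (φ x) (χ u) w + V' (f' (φ x) (χ u) w)) ∂μ'
        = ∫⁻ w, (g' (φ x) (χ u) w + V' (f' (φ x) (χ u) w)) ∂μ.map ψ := by rw [hψ.map_eq]
    _ ≤ ∫⁻ w, (g' (φ x) (χ u) (ψ w) + V' (f' (φ x) (χ u) (ψ w))) ∂μ := lintegral_map_le _ _
    _ ≤ ∫⁻ w, (g x u w + V (f x u w)) ∂μ := by
      refine lintegral_mono fun w => add_le_add (hg x u w) ?_
      rw [← hf]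
      exact hV _

variable {N k : ℕ} {μ : ℕ → Measure W} {f : ℕ → X → U → W → X} {g : ℕ → X → U → W → ℝ≥0∞}
  {gN : X → ℝ≥0∞} {J : ℕ → X → ℝ≥0∞} {φ φ' : X → X} {χ χ' : U → U} {ψ ψ' : W → W}

theorem IsValueFunction.apply_symmetry_le (hJ : IsValueFunction N μ f g gN J)
    (h : IsControlSymmetry N μ f g gN φ χ ψ) (hk : k ≤ N) (x : X) : J k (φ x) ≤ J k x := by
  induction hk using Nat.decreasingInduction generalizing x with
  | self => rw [hJ.terminal, hJ.terminal, h.terminalCost]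
  | of_succ k hk ih =>
    rw [hJ.recursion k hk, hJ.recursion k hk]
    exact bellmanOperator_apply_le (h.measurePreserving k hk) (h.dynamics k hk)
      (fun x u w => (h.stageCost k hk x u w).le) ih x

theorem IsValueFunction.apply_symmetry_eq (hJ : IsValueFunction N μ f g gN J)
    (h : IsControlSymmetry N μ f g gN φ χ ψ) (h' : IsControlSymmetry N μ f g gN φ' χ' ψ')
    (hφ : Function.LeftInverse φ' φ) (hk : k ≤ N) (x : X) : J k (φ x) = J k x := by
  refine (hJ.apply_symmetry_le h hk x).antisymm ?_
  calc
    J k x = J k (φ' (φ x)) := by rw [hφ x]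
    _ ≤ J k (φ x) := hJ.apply_symmetry_le h' hk (φ x)

theorem dynamic_programming_in_reduced_coordinates_general
    (hJ : IsValueFunction N μ f g gN J) {G : Type*} [Group G]
    {φ : G → X → X} {χ : G → U → U} {ψ : G → W → W}
    (hφe : φ 1 = id) (hφmul : ∀ α β, φ (α * β) = φ α ∘ φ β)
    (hsymm : ∀ α, IsControlSymmetry N μ f g gN (φ α) (χ α) (ψ α))
    {Y : Type*} {ρ : X → Y} {s : Y → X} {γ : X → G} (hframe : ∀ x, φ (γ x) x = s (ρ x)) :
    (∀ y, (J N ∘ s) y = (gN ∘ s) y) ∧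
      ∀ k < N, ∀ y,
        (J k ∘ s) y = bellmanOperator (μ k) (f k) (g k) ((J (k + 1) ∘ s) ∘ ρ) (s y) := by
  have hinv (α : G) : Function.LeftInverse (φ α⁻¹) (φ α) := by
    rw [Function.leftInverse_iff_comp, ← hφmul, inv_mul_cancel, hφe]
  refine ⟨fun y => hJ.terminal (s y), fun k hk y => ?_⟩
  have hreduced : (J (k + 1) ∘ s) ∘ ρ = J (k + 1) := funext fun x => by
    simpa only [Function.comp_apply, hframe] using
      hJ.apply_symmetry_eq (hsymm (γ x)) (hsymm (γ x)⁻¹) (hinv (γ x)) hk x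
  rw [hreduced]
  exact hJ.recursion k hk (s y)

end Bellman

/-- Dynamic programming in reduced coordinates: under the
group-symmetry and moving-frame assumptions, the reduced value functions
`J̄ k := J k ∘ s` satisfy the backward recursion on the range of `ρ`, together with
`J̄ N = gN ∘ s`. -/
theorem dynamic_programming_in_reduced_coordinates
    {X U W : Type*} [MeasurableSpace X] [MeasurableSpace U] [MeasurableSpace W]
    [Nonempty U]
    (N : ℕ) (hN : 1 ≤ N)
    (μ : ℕ → Measure W) (hμ : ∀ k < N, IsProbabilityMeasure (μ k))
    (f : ℕ → X → U → W → X)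
    (g : ℕ → X → U → W → ℝ≥0∞)
    (gN : X → ℝ≥0∞)
    (J : ℕ → X → ℝ≥0∞)
    (hJN : ∀ x, J N x = gN x)
    (hJ : ∀ k < N, ∀ x, J k x = ⨅ u : U, ∫⁻ w, (g k x u w + J (k + 1) (f k x u w)) ∂(μ k))
    -- group symmetry
    (G : Type*) [Group G]
    (φ : G → X → X) (χ : G → U → U) (ψ : G → W → W)
    (hχbij : ∀ α : G, Function.Bijective (χ α))
    (hψbij : ∀ α : G, Function.Bijective (ψ α))
    (hψmeas : ∀ α : G, Measurable (ψ α))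
    (hφe : φ 1 = id) (hφmul : ∀ α β : G, φ (α * β) = φ α ∘ φ β)
    (hχe : χ 1 = id) (hχmul : ∀ α β : G, χ (α * β) = χ α ∘ χ β)
    (hψe : ψ 1 = id) (hψmul : ∀ α β : G, ψ (α * β) = ψ α ∘ ψ β)
    (hf : ∀ α : G, ∀ k < N, ∀ (x : X) (u : U) (w : W),
      φ α (f k x u w) = f k (φ α x) (χ α u) (ψ α w))
    (hg : ∀ α : G, ∀ k < N, ∀ (x : X) (u : U) (w : W),
      g k (φ α x) (χ α u) (ψ α w) = g k x u w)
    (hgN : ∀ (α : G) (x : X), gN (φ α x) = gN x)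
    (hmap : ∀ α : G, ∀ k < N, Measure.map (ψ α) (μ k) = μ k)
    -- moving frame
    (Y : Type*) (ρ : X → Y)
    (hρ : ∀ (α : G) (x : X), ρ (φ α x) = ρ x)
    (s : Y → X) (γ : X → G)
    (hframe : ∀ x : X, φ (γ x) x = s (ρ x))
    -- measurability
    (hmeasJ : ∀ k < N, ∀ (x : X) (u : U),
      Measurable fun w => g k x u w + J (k + 1) (f k x u w)) :
    (∀ y : Y, (J N ∘ s) y = (gN ∘ s) y) ∧
      ∀ k < N, ∀ y ∈ Set.range ρ,
        (J k ∘ s) y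
          = ⨅ u : U, ∫⁻ w,
              (g k (s y) u w + (J (k + 1) ∘ s) (ρ (f k (s y) u w))) ∂(μ k) := by
  have hsymm (α : G) : IsControlSymmetry N μ f g gN (φ α) (χ α) (ψ α) :=
    ⟨hf α, hg α, hgN α, fun k hk => ⟨hψmeas α, hmap α k hk⟩⟩
  exact (dynamic_programming_in_reduced_coordinates_general
    ⟨hJN, hJ⟩ hφe hφmul hsymm hframe).imp_right fun h k hk y _ => h k hk y
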